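/- arXiv:2302.02883 — 5 statements merged into one kernel-verified Lean document; each statement's English description precedes it below -/
import Mathlib

section
/- SL(2,ℤ) has the presentation ⟨s, t | (st)³ = s², s⁴ = 1⟩: the group homomorphism from the presented group on two generators s, t with relators (st)³s⁻² and s⁴ to SL(2,ℤ), sending the generator s to the matrix [[0,-1],[1,0]] and the generator t to the matrix [[1,1],[0,1]], is a group isomorphism. -/
open Matrix MatrixGroups

/-- The two generators `s` and `t` of the presentation. -/
inductive SL2Gen : Type
  | s : SL2Gen
  | t : SL2Gen

/-- The two relators `(st)³s⁻²` and `s⁴` of the presentation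
`⟨s, t | (st)³ = s², s⁴ = 1⟩`. -/
def SL2Rels : Set (FreeGroup SL2Gen) :=
  {(FreeGroup.of SL2Gen.s * FreeGroup.of SL2Gen.t) ^ 3 * (FreeGroup.of SL2Gen.s ^ 2)⁻¹,
    FreeGroup.of SL2Gen.s ^ 4}

/-- The map sending the generator `s` to the matrix `[[0,-1],[1,0]]` and the
generator `t` to the matrix `[[1,1],[0,1]]`. -/
def SL2GenMap : SL2Gen → SL(2, ℤ)
  | SL2Gen.s => ModularGroup.S
  | SL2Gen.t => ModularGroup.T

/-- The monoid generated by `t` and `s t⁻¹ s⁻¹`. -/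
inductive SL2Pos {G : Type*} [Group G] (s t : G) : G → Prop
  | one : SL2Pos s t 1
  | p (m : G) : SL2Pos s t m → SL2Pos s t (t * m)
  | q (m : G) : SL2Pos s t m → SL2Pos s t (s * t⁻¹ * s⁻¹ * m)

/-- Normal forms. -/
def SL2NF {G : Type*} [Group G] (s t : G) (g : G) : Prop :=
  ∃ (m : G) (b : ℕ), SL2Pos s t m ∧
    (g = m * s ^ b ∨ g = s * t * (m * s ^ b) ∨ g = s * t * (s * t * (m * s ^ b)))

section
variable {G : Type*} [Group G] {s t : G}

theorem sl2_comm_t (h3 : (s * t) ^ 3 = s ^ 2) : Commute (s ^ 2) t := by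
  have h1 : Commute (s ^ 2) (s * t) := by
    rw [← h3]; exact Commute.pow_self _ _
  have h2 : Commute (s ^ 2) s := Commute.pow_self _ _
  have := h2.inv_right.mul_right h1
  simpa using this

theorem sl2_comm_pos (h3 : (s * t) ^ 3 = s ^ 2) {m : G} (hm : SL2Pos s t m) :
    Commute (s ^ 2) m := by
  have h2 : Commute (s ^ 2) s := Commute.pow_self _ _
  have ht := sl2_comm_t h3
  induction hm with
  | one => exact Commute.one_right _
  | p m _ ih => exact ht.mul_right ih
  | q m _ ih => exact ((h2.mul_right ht.inv_right).mul_right h2.inv_right).mul_right ih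

theorem sl2_z_mul (h3 : (s * t) ^ 3 = s ^ 2) {m : G} (hm : SL2Pos s t m) (b : ℕ) :
    s ^ 2 * (m * s ^ b) = m * s ^ (b + 2) := by
  rw [← mul_assoc, (sl2_comm_pos h3 hm).eq, mul_assoc, ← pow_add, add_comm]

theorem sl2_nf_u (h3 : (s * t) ^ 3 = s ^ 2) {g : G} (hg : SL2NF s t g) :
    SL2NF s t (s * t * g) := by
  obtain ⟨m, b, hm, rfl | rfl | rfl⟩ := hg
  · exact ⟨m, b, hm, Or.inr (Or.inl rfl)⟩
  · exact ⟨m, b, hm, Or.inr (Or.inr rfl)⟩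
  · refine ⟨m, b + 2, hm, Or.inl ?_⟩
    rw [← sl2_z_mul h3 hm, ← h3]
    simp only [pow_succ, pow_zero, one_mul, mul_assoc]

theorem sl2_q (h3 : (s * t) ^ 3 = s ^ 2) : s * t * (s * t) = s * (s * (t⁻¹ * s⁻¹)) := by
  have : s * t * (s * t) = (s * t) ^ 3 * (s * t)⁻¹ := by
    rw [pow_succ, mul_inv_cancel_right, pow_two]
  rw [this, h3, pow_two, _root_.mul_inv_rev]; simp only [mul_assoc]

theorem sl2_nf_s (h4 : s ^ 4 = 1) (h3 : (s * t) ^ 3 = s ^ 2) {g : G} (hg : SL2NF s t g) :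
    SL2NF s t (s * g) := by
  obtain ⟨m, b, hm, rfl | rfl | rfl⟩ := hg
  · cases hm with
    | one => exact ⟨1, b + 1, .one, Or.inl (by rw [one_mul, one_mul, pow_succ'])⟩
    | p m hm => exact ⟨m, b, hm, Or.inr (Or.inl (by simp only [mul_assoc]))⟩
    | q m hm =>
      refine ⟨m, b, hm, Or.inr (Or.inr ?_)⟩
      rw [← mul_assoc (s * t) (s * t), sl2_q h3]
      simp only [mul_assoc]
  · refine ⟨t * m, b + 2, .p m hm, Or.inl ?_⟩
    rw [← sl2_z_mul h3 (.p m hm)]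
    simp only [pow_two, mul_assoc]
  · refine ⟨s * t⁻¹ * s⁻¹ * m, b + 2, .q m hm, Or.inl ?_⟩
    rw [← sl2_z_mul h3 (.q m hm), ← mul_assoc (s * t) (s * t), sl2_q h3]
    simp only [pow_two, mul_assoc]

theorem sl2_nf_sinv (h4 : s ^ 4 = 1) (h3 : (s * t) ^ 3 = s ^ 2) {g : G} (hg : SL2NF s t g) :
    SL2NF s t (s⁻¹ * g) := by
  have h : s⁻¹ * g = s * (s * (s * g)) := by
    rw [inv_mul_eq_iff_eq_mul]
    have : s * (s * (s * (s * g))) = s ^ 4 * g := by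
      simp only [pow_succ, pow_zero, one_mul, mul_assoc]
    rw [this, h4, one_mul]
  rw [h]
  exact sl2_nf_s h4 h3 (sl2_nf_s h4 h3 (sl2_nf_s h4 h3 hg))

theorem sl2_nf_t (h4 : s ^ 4 = 1) (h3 : (s * t) ^ 3 = s ^ 2) {g : G} (hg : SL2NF s t g) :
    SL2NF s t (t * g) := by
  have := sl2_nf_sinv h4 h3 (sl2_nf_u h3 hg)
  simpa [mul_assoc] using this

theorem sl2_nf_tinv (h4 : s ^ 4 = 1) (h3 : (s * t) ^ 3 = s ^ 2) {g : G} (hg : SL2NF s t g) :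
    SL2NF s t (t⁻¹ * g) := by
  have h : t⁻¹ * g = s⁻¹ * (s⁻¹ * (s * t * (s * t * (s * g)))) := by
    rw [← mul_assoc (s * t) (s * t), sl2_q h3]; group
  rw [h]
  exact sl2_nf_sinv h4 h3 (sl2_nf_sinv h4 h3 (sl2_nf_u h3 (sl2_nf_u h3 (sl2_nf_s h4 h3 hg))))

end

theorem sl2_pos_entries {G : Type*} [Group G] {s t : G} (φ : G →* SL(2, ℤ))
    (hs : φ s = ModularGroup.S) (ht : φ t = ModularGroup.T) {m : G} (hm : SL2Pos s t m) :
    1 ≤ (φ m).1 0 0 ∧ 1 ≤ (φ m).1 1 1 ∧ 0 ≤ (φ m).1 0 1 ∧ 0 ≤ (φ m).1 1 0 ∧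
      (m = 1 ∨ 1 ≤ (φ m).1 0 1 + (φ m).1 1 0) := by
  induction hm with
  | one => simp
  | p m _ ih =>
    obtain ⟨h1, h2, h3, h4, -⟩ := ih
    have e : (φ (t * m)).1 = !![1, 1; 0, 1] * (φ m).1 := by
      rw [map_mul, ht]; rfl
    rw [e]
    simp [Matrix.mul_apply, Fin.sum_univ_two]
    refine ⟨?_, ?_, ?_, ?_, Or.inr ?_⟩ <;> omega
  | q m _ ih =>
    obtain ⟨h1, h2, h3, h4, -⟩ := ih
    have e : (φ (s * t⁻¹ * s⁻¹ * m)).1 = !![1, 0; 1, 1] * (φ m).1 := by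
      have : ModularGroup.S * ModularGroup.T⁻¹ * ModularGroup.S⁻¹
          = (⟨!![1, 0; 1, 1], by simp⟩ : SL(2, ℤ)) := Subtype.ext (by decide)
      simp only [map_mul, map_inv, hs, ht, this]
      rfl
    rw [e]
    simp [Matrix.mul_apply, Fin.sum_univ_two]
    refine ⟨?_, ?_, ?_, ?_, Or.inr ?_⟩ <;> omega

theorem sl2_nf_ker {G : Type*} [Group G] {s t : G} (φ : G →* SL(2, ℤ)) (hs4 : s ^ 4 = 1)
    (hs : φ s = ModularGroup.S) (ht : φ t = ModularGroup.T) {g : G} (hg : SL2NF s t g)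
    (h : φ g = 1) : g = 1 := by
  obtain ⟨m, b, hm, hg⟩ := hg
  obtain ⟨h1, h2, h3, h4, h5⟩ := sl2_pos_entries φ hs ht hm
  have hb : s ^ b = s ^ (b % 4) := by
    conv_lhs => rw [← Nat.div_add_mod b 4, pow_add, pow_mul, hs4, one_pow, one_mul]
  rw [hb] at hg
  have hlt : b % 4 < 4 := Nat.mod_lt _ (by norm_num)
  generalize b % 4 = c at hg hlt
  have key : ∀ A : SL(2, ℤ), φ m = A →
      1 ≤ A.1 0 0 ∧ 1 ≤ A.1 1 1 ∧ 0 ≤ A.1 0 1 ∧ 0 ≤ A.1 1 0 := by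
    rintro A rfl; exact ⟨h1, h2, h3, h4⟩
  rcases hg with hg | hg | hg
  · have e : φ m = (ModularGroup.S ^ c)⁻¹ := by
      rw [hg, map_mul, map_pow, hs] at h
      exact eq_inv_of_mul_eq_one_left h
    have k := key _ e
    interval_cases c
    · have e1 : φ m = 1 := by simpa using e
      rcases h5 with rfl | h5
      · simpa using hg
      · rw [e1] at h5; simp at h5
    all_goals exact absurd k (by decide)
  · have e : φ m = (ModularGroup.S * ModularGroup.T)⁻¹ * (ModularGroup.S ^ c)⁻¹ := by
      rw [hg] at h
      simp only [map_mul, map_pow, hs, ht] at h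
      rw [eq_mul_inv_iff_mul_eq]
      exact eq_inv_of_mul_eq_one_right h
    have k := key _ e
    interval_cases c
    all_goals exact absurd k (by decide)
  · have e : φ m = (ModularGroup.S * ModularGroup.T)⁻¹ * (ModularGroup.S * ModularGroup.T)⁻¹
        * (ModularGroup.S ^ c)⁻¹ := by
      rw [hg] at h
      simp only [map_mul, map_pow, hs, ht] at h
      rw [eq_mul_inv_iff_mul_eq, ← _root_.mul_inv_rev]
      exact eq_inv_of_mul_eq_one_right (by rw [mul_assoc]; exact h)
    have k := key _ e
    interval_cases c
    all_goals exact absurd k (by decide)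

/-- `SL(2, ℤ)` has the presentation `⟨s, t | (st)³ = s², s⁴ = 1⟩`: the relators are sent
to `1` by the induced map on the free group (so that the homomorphism
`PresentedGroup SL2Rels →* SL(2, ℤ)` sending `s ↦ [[0,-1],[1,0]]`, `t ↦ [[1,1],[0,1]]`
is well defined), and this homomorphism is a group isomorphism (i.e. bijective). -/
theorem sl2z_presentation :
    ∃ h : ∀ r ∈ SL2Rels, FreeGroup.lift SL2GenMap r = 1,
      Function.Bijective (PresentedGroup.toGroup h) := by
  have h : ∀ r ∈ SL2Rels, FreeGroup.lift SL2GenMap r = 1 := by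
    rintro r (rfl | rfl)
    · simp only [map_mul, map_pow, map_inv, FreeGroup.lift_apply_of, SL2GenMap]
      decide
    · simp only [map_pow, FreeGroup.lift_apply_of, SL2GenMap]
      decide
  refine ⟨h, ?_, ?_⟩
  · set s : PresentedGroup SL2Rels := PresentedGroup.of SL2Gen.s with hs
    set t : PresentedGroup SL2Rels := PresentedGroup.of SL2Gen.t with ht
    have h4 : s ^ 4 = 1 :=
      PresentedGroup.one_of_mem (rels := SL2Rels) (Or.inr rfl)
    have h3 : (s * t) ^ 3 = s ^ 2 :=
      mul_inv_eq_one.mp (PresentedGroup.one_of_mem (rels := SL2Rels) (Or.inl rfl))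
    have nf : ∀ w : FreeGroup SL2Gen, ∀ x, SL2NF s t x →
        SL2NF s t (PresentedGroup.mk SL2Rels w * x) := by
      intro w
      induction w using FreeGroup.induction_on with
      | C1 => intro x hx; simpa using hx
      | of a =>
        intro x hx
        cases a
        · exact sl2_nf_s h4 h3 hx
        · exact sl2_nf_t h4 h3 hx
      | inv_of a _ =>
        intro x hx
        rw [map_inv]
        cases a
        · exact sl2_nf_sinv h4 h3 hx
        · exact sl2_nf_tinv h4 h3 hx
      | mul v w hv hw =>
        intro x hx
        rw [map_mul, mul_assoc]
        exact hv _ (hw _ hx)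
    rw [injective_iff_map_eq_one]
    intro g hg
    obtain ⟨w, rfl⟩ := PresentedGroup.mk_surjective SL2Rels g
    refine sl2_nf_ker (s := s) (t := t) (PresentedGroup.toGroup h) h4 ?_ ?_ ?_ hg
    · exact PresentedGroup.toGroup.of h
    · exact PresentedGroup.toGroup.of h
    · have := nf w 1 ⟨1, 0, .one, Or.inl (by simp)⟩
      simpa using this
  · rw [← MonoidHom.range_eq_top, eq_top_iff,
      ← SpecialLinearGroup.SL2Z_generators, Subgroup.closure_le]
    rintro x (rfl | rfl)
    · exact ⟨PresentedGroup.of SL2Gen.s, PresentedGroup.toGroup.of h⟩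
    · exact ⟨PresentedGroup.of SL2Gen.t, PresentedGroup.toGroup.of h⟩
end

section
/- Let V be a nontrivial finite-dimensional complex vector space and let S, T, C be invertible linear automorphisms of V, and let p⁺, p⁻, D, ζ be nonzero complex numbers satisfying: TC = CT, SC = CS, C² = 1, (ST)³ = p⁺ · S², S² = p⁺p⁻ · C, D² = p⁺p⁻, and ζ³ = p⁺ · D⁻¹. Then there exists a group homomorphism ρ : SL(2,ℤ) → GL(V) with ρ(s) = D⁻¹ · S and ρ(t) = ζ⁻¹ · T, where s = [[0,-1],[1,0]] and t = [[1,1],[0,1]]; moreover such ρ is unique. -/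
open Matrix MatrixGroups

/-- The monoid of words in `t` and `tst`. -/
inductive PosWord {K : Type*} [Group K] (s t : K) : K → Prop
  | one : PosWord s t 1
  | tmul (m : K) : PosWord s t m → PosWord s t (t * m)
  | lmul (m : K) : PosWord s t m → PosWord s t (t * s * t * m)

/-- Normal forms `z^e u^j m s^i` with `z = s²`, `u = st`. -/
def NF {K : Type*} [Group K] (s t : K) (h : K) : Prop :=
  ∃ e j i : ℕ, ∃ m : K, j < 3 ∧ i < 2 ∧ PosWord s t m ∧
    h = (s ^ 2) ^ e * (s * t) ^ j * m * s ^ i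

lemma NF.u_mul {K : Type*} [Group K] {s t : K} (h3 : (s * t) ^ 3 = s ^ 2) {h : K}
    (hh : NF s t h) : NF s t (s * t * h) := by
  obtain ⟨e, j, i, m, hj, hi, hm, rfl⟩ := hh
  have hc : Commute (s * t) ((s ^ 2) ^ e) := by
    rw [← h3]; exact ((Commute.refl (s * t)).pow_right 3).pow_right e
  have key : s * t * ((s ^ 2) ^ e * (s * t) ^ j * m * s ^ i)
      = (s ^ 2) ^ e * (s * t) ^ (j + 1) * m * s ^ i := by
    rw [pow_succ' (s * t) j]
    simp only [← mul_assoc]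
    rw [show s * t * (s ^ 2) ^ e = (s ^ 2) ^ e * s * t by rw [hc.eq, mul_assoc]]
  rw [key]
  rcases Nat.lt_or_ge (j + 1) 3 with h | h
  · exact ⟨e, j + 1, i, m, h, hi, hm, rfl⟩
  · obtain rfl : j = 2 := by omega
    refine ⟨e + 1, 0, i, m, by norm_num, hi, hm, ?_⟩
    rw [h3, pow_succ (s ^ 2) e, pow_zero, mul_one]

lemma NF.s_mul {K : Type*} [Group K] {s t : K} {h : K}
    (hh : NF s t h) : NF s t (s * h) := by
  obtain ⟨e, j, i, m, hj, hi, hm, rfl⟩ := hh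
  have hc : s * (s ^ 2) ^ e = (s ^ 2) ^ e * s :=
    (((Commute.refl s).pow_right 2).pow_right e).eq
  have key : s * ((s ^ 2) ^ e * (s * t) ^ j * m * s ^ i)
      = (s ^ 2) ^ e * (s * (s * t) ^ j * m * s ^ i) := by
    simp only [← mul_assoc]; rw [hc]
  rw [key]
  interval_cases j
  · cases hm with
    | one =>
      interval_cases i
      · exact ⟨e, 0, 1, 1, by norm_num, by norm_num, .one, by simp⟩
      · exact ⟨e + 1, 0, 0, 1, by norm_num, by norm_num, .one, by simp [pow_succ]⟩
    | tmul m hm => exact ⟨e, 1, i, m, by norm_num, hi, hm, by simp [mul_assoc]⟩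
    | lmul m hm => exact ⟨e, 2, i, m, by norm_num, hi, hm, by simp [mul_assoc, pow_two]⟩
  · exact ⟨e + 1, 0, i, _, by norm_num, hi, .tmul m hm, by simp [mul_assoc, pow_succ]⟩
  · exact ⟨e + 1, 0, i, _, by norm_num, hi, .lmul m hm, by simp [mul_assoc, pow_succ]⟩

lemma NF.of_mem {K : Type*} [Group K] {s t : K} (h3 : (s * t) ^ 3 = s ^ 2) (h4 : s ^ 4 = 1)
    {h : K} (hh : h ∈ Subgroup.closure {s, t}) : NF s t h := by
  have hs : ∀ x, NF s t x → NF s t (s * x) := fun x hx => hx.s_mul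
  have hu : ∀ x, NF s t x → NF s t (s * t * x) := fun x hx => hx.u_mul h3
  have hsi : ∀ x, NF s t x → NF s t (s⁻¹ * x) := fun x hx => by
    have e : s⁻¹ = s * s * s := inv_eq_of_mul_eq_one_right (by rw [← h4]; simp only [pow_succ, pow_zero, one_mul, mul_assoc])
    rw [e, mul_assoc, mul_assoc]; exact hs _ (hs _ (hs _ hx))
  have hui : ∀ x, NF s t x → NF s t ((s * t)⁻¹ * x) := fun x hx => by
    have e : (s * t)⁻¹ = (s * t) * (s * t) * s * s := by
      apply inv_eq_of_mul_eq_one_right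
      calc s * t * (s * t * (s * t) * s * s) = (s * t) ^ 3 * s ^ 2 := by
            simp only [pow_succ, pow_zero, one_mul, mul_assoc]
        _ = 1 := by rw [h3, ← pow_add, h4]
    rw [e]; simp only [mul_assoc]
    have := hu _ (hu _ (hs _ (hs _ hx)))
    simpa only [mul_assoc] using this
  induction hh using Subgroup.closure_induction_left with
  | one => exact ⟨0, 0, 0, 1, by norm_num, by norm_num, .one, by simp⟩
  | mul_left x hx y _ ih =>
    rcases hx with rfl | rfl
    · exact hs _ ih
    · simpa [mul_assoc] using hsi _ (hu _ ih)
  | inv_mul_cancel x hx y _ ih =>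
    rcases hx with rfl | rfl
    · exact hsi _ ih
    · simpa [mul_assoc] using hui _ (hs _ ih)

lemma S_mul_zero (A : SL(2, ℤ)) (j : Fin 2) : (ModularGroup.S * A) 0 j = -A 1 j := by
  change (ModularGroup.S.1 * A.1) 0 j = _
  rw [Matrix.mul_apply, Fin.sum_univ_two]
  simp [ModularGroup.S]

lemma S_mul_one (A : SL(2, ℤ)) (j : Fin 2) : (ModularGroup.S * A) 1 j = A 0 j := by
  change (ModularGroup.S.1 * A.1) 1 j = _
  rw [Matrix.mul_apply, Fin.sum_univ_two]
  simp [ModularGroup.S]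

lemma T_mul_zero (A : SL(2, ℤ)) (j : Fin 2) : (ModularGroup.T * A) 0 j = A 0 j + A 1 j := by
  change (ModularGroup.T.1 * A.1) 0 j = _
  rw [Matrix.mul_apply, Fin.sum_univ_two]
  simp [ModularGroup.T]

lemma T_mul_one (A : SL(2, ℤ)) (j : Fin 2) : (ModularGroup.T * A) 1 j = A 1 j := by
  change (ModularGroup.T.1 * A.1) 1 j = _
  rw [Matrix.mul_apply, Fin.sum_univ_two]
  simp [ModularGroup.T]

lemma mul_S_zero (A : SL(2, ℤ)) (i : Fin 2) : (A * ModularGroup.S) i 0 = A i 1 := by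
  change (A.1 * ModularGroup.S.1) i 0 = _
  rw [Matrix.mul_apply, Fin.sum_univ_two]
  simp [ModularGroup.S]

lemma mul_S_one (A : SL(2, ℤ)) (i : Fin 2) : (A * ModularGroup.S) i 1 = -A i 0 := by
  change (A.1 * ModularGroup.S.1) i 1 = _
  rw [Matrix.mul_apply, Fin.sum_univ_two]
  simp [ModularGroup.S]

lemma one_entries : (1 : SL(2, ℤ)) 0 0 = 1 ∧ (1 : SL(2, ℤ)) 0 1 = 0 ∧
    (1 : SL(2, ℤ)) 1 0 = 0 ∧ (1 : SL(2, ℤ)) 1 1 = 1 := by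
  simp

lemma PosWord.entries {G : Type*} [Group G] {a b : G} {p : SL(2, ℤ) × G}
    (hp : PosWord (ModularGroup.S, a) (ModularGroup.T, b) p) :
    (0 ≤ p.1 0 0 ∧ 0 ≤ p.1 0 1 ∧ 0 ≤ p.1 1 0 ∧ 0 ≤ p.1 1 1 ∧ 1 ≤ p.1 0 0 + p.1 0 1 ∧
      1 ≤ p.1 1 0 + p.1 1 1) ∧
    (p = 1 ∨ 3 ≤ p.1 0 0 + p.1 0 1 + p.1 1 0 + p.1 1 1) := by
  induction hp with
  | one => simp
  | tmul m _ ih =>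
    obtain ⟨ih, -⟩ := ih
    simp only [Prod.fst_mul, mul_assoc, S_mul_zero, S_mul_one, T_mul_zero, T_mul_one]
    omega
  | lmul m _ ih =>
    obtain ⟨ih, -⟩ := ih
    simp only [Prod.fst_mul, mul_assoc, S_mul_zero, S_mul_one, T_mul_zero, T_mul_one]
    omega

lemma ker_trivial {G : Type*} [Group G] {a b : G} (h3 : (a * b) ^ 3 = a ^ 2) (h4 : a ^ 4 = 1)
    {p : SL(2, ℤ) × G}
    (hp : p ∈ Subgroup.closure {((ModularGroup.S, a) : SL(2, ℤ) × G), (ModularGroup.T, b)})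
    (h1 : p.1 = 1) : p = 1 := by
  have H3 : (((ModularGroup.S, a) : SL(2, ℤ) × G) * (ModularGroup.T, b)) ^ 3
      = ((ModularGroup.S, a) : SL(2, ℤ) × G) ^ 2 := by
    refine Prod.ext ?_ h3
    change (ModularGroup.S * ModularGroup.T) ^ 3 = ModularGroup.S ^ 2
    decide
  have H4 : ((ModularGroup.S, a) : SL(2, ℤ) × G) ^ 4 = 1 := by
    refine Prod.ext ?_ h4
    change ModularGroup.S ^ 4 = 1
    decide
  obtain ⟨e, j, i, m, hj, hi, hm, rfl⟩ := NF.of_mem H3 H4 hp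
  obtain ⟨hpos, hm1⟩ := hm.entries
  have hz : (((ModularGroup.S, a) : SL(2, ℤ) × G) ^ 2) ^ e
      = (((ModularGroup.S, a) : SL(2, ℤ) × G) ^ 2) ^ (e % 2) := by
    apply pow_eq_pow_mod
    rw [← pow_mul, H4]
  rw [hz] at h1 ⊢
  have he : e % 2 < 2 := Nat.mod_lt _ (by norm_num)
  generalize e % 2 = f at *
  have e00 := congrArg (fun A : SL(2, ℤ) => A 0 0) h1
  have e01 := congrArg (fun A : SL(2, ℤ) => A 0 1) h1
  have e10 := congrArg (fun A : SL(2, ℤ) => A 1 0) h1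
  have e11 := congrArg (fun A : SL(2, ℤ) => A 1 1) h1
  interval_cases f <;> interval_cases j <;> interval_cases i <;>
    simp only [Prod.fst_mul, pow_succ, pow_zero, one_mul, mul_one, mul_assoc, S_mul_zero,
      S_mul_one, T_mul_zero, T_mul_one, mul_S_zero, mul_S_one, one_entries]
      at e00 e01 e10 e11 <;> first
    | (exfalso; omega)
    | (rcases hm1 with rfl | hm1
       · simp
       · exfalso; omega)

lemma SL2Z_lift {G : Type*} [Group G] {a b : G} (h3 : (a * b) ^ 3 = a ^ 2) (h4 : a ^ 4 = 1) :
    ∃ ρ : SL(2, ℤ) →* G, ρ ModularGroup.S = a ∧ ρ ModularGroup.T = b := by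
  let H := Subgroup.closure {((ModularGroup.S, a) : SL(2, ℤ) × G), (ModularGroup.T, b)}
  have hS : ((ModularGroup.S, a) : SL(2, ℤ) × G) ∈ H := Subgroup.subset_closure (by simp)
  have hT : ((ModularGroup.T, b) : SL(2, ℤ) × G) ∈ H := Subgroup.subset_closure (by simp)
  let f : H →* SL(2, ℤ) := (MonoidHom.fst _ _).comp H.subtype
  have hinj : Function.Injective f := by
    rw [injective_iff_map_eq_one]
    rintro ⟨p, hp⟩ h
    exact Subtype.ext (ker_trivial h3 h4 hp h)
  have hsurj : Function.Surjective f := by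
    rw [← MonoidHom.range_eq_top, eq_top_iff, ← SpecialLinearGroup.SL2Z_generators,
      Subgroup.closure_le]
    rintro x (rfl | rfl)
    · exact ⟨⟨_, hS⟩, rfl⟩
    · exact ⟨⟨_, hT⟩, rfl⟩
  let E := MulEquiv.ofBijective f ⟨hinj, hsurj⟩
  refine ⟨((MonoidHom.snd _ _).comp H.subtype).comp E.symm.toMonoidHom, ?_, ?_⟩
  · have : E.symm ModularGroup.S = ⟨_, hS⟩ := by rw [MulEquiv.symm_apply_eq]; rfl
    simp [this]
  · have : E.symm ModularGroup.T = ⟨_, hT⟩ := by rw [MulEquiv.symm_apply_eq]; rfl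
    simp [this]

/-- Given a nontrivial finite dimensional complex vector space `V`, invertible linear
automorphisms `S, T, C` of `V` and nonzero scalars `p⁺, p⁻, D, ζ` satisfying the relations
`TC = CT`, `SC = CS`, `C² = 1`, `(ST)³ = p⁺·S²`, `S² = p⁺p⁻·C`, `D² = p⁺p⁻` and
`ζ³ = p⁺·D⁻¹`, there is a unique group homomorphism `ρ : SL(2, ℤ) → GL(V)` with
`ρ(s) = D⁻¹·S` and `ρ(t) = ζ⁻¹·T`, where `s = [[0,-1],[1,0]]` and `t = [[1,1],[0,1]]`. -/
theorem modular_representation_well_defined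
    {V : Type*} [AddCommGroup V] [Module ℂ V] [FiniteDimensional ℂ V] [Nontrivial V]
    (S T C : (Module.End ℂ V)ˣ) (pPlus pMinus D ζ : ℂ)
    (hpPlus : pPlus ≠ 0) (hpMinus : pMinus ≠ 0) (hD : D ≠ 0) (hζ : ζ ≠ 0)
    (hTC : T * C = C * T) (hSC : S * C = C * S) (hC2 : C ^ 2 = 1)
    (hST : ((S : Module.End ℂ V) * (T : Module.End ℂ V)) ^ 3
      = pPlus • (S : Module.End ℂ V) ^ 2)
    (hS2 : (S : Module.End ℂ V) ^ 2 = (pPlus * pMinus) • (C : Module.End ℂ V))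
    (hD2 : D ^ 2 = pPlus * pMinus)
    (hζ3 : ζ ^ 3 = pPlus * D⁻¹) :
    ∃! ρ : SL(2, ℤ) →* (Module.End ℂ V)ˣ,
      (ρ ModularGroup.S : Module.End ℂ V) = D⁻¹ • (S : Module.End ℂ V) ∧
      (ρ ModularGroup.T : Module.End ℂ V) = ζ⁻¹ • (T : Module.End ℂ V) := by
  let c : ℂˣ → (Module.End ℂ V)ˣ := Units.map (algebraMap ℂ (Module.End ℂ V)).toMonoidHom
  have hc : ∀ (x : ℂˣ) (A : (Module.End ℂ V)ˣ),
      ((c x * A : (Module.End ℂ V)ˣ) : Module.End ℂ V) = (x : ℂ) • (A : Module.End ℂ V) := by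
    intro x A
    rw [Algebra.smul_def]; rfl
  let a := c (Units.mk0 D⁻¹ (inv_ne_zero hD)) * S
  let b := c (Units.mk0 ζ⁻¹ (inv_ne_zero hζ)) * T
  have ha : (a : Module.End ℂ V) = D⁻¹ • (S : Module.End ℂ V) := hc _ _
  have hb : (b : Module.End ℂ V) = ζ⁻¹ • (T : Module.End ℂ V) := hc _ _
  have ha2 : a ^ 2 = C := by
    apply Units.ext
    rw [Units.val_pow_eq_pow_val, ha, smul_pow, hS2, smul_smul, ← hD2, ← mul_pow,
      inv_mul_cancel₀ hD, one_pow, one_smul]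
  have h4 : a ^ 4 = 1 := by
    rw [show 4 = 2 * 2 from rfl, pow_mul, ha2, hC2]
  have h3 : (a * b) ^ 3 = a ^ 2 := by
    apply Units.ext
    rw [Units.val_pow_eq_pow_val, Units.val_pow_eq_pow_val, Units.val_mul, ha, hb,
      smul_mul_smul_comm, smul_pow, hST, smul_smul, smul_pow]
    congr 1
    rw [mul_pow, inv_pow ζ, hζ3]
    field_simp
  obtain ⟨ρ, hρS, hρT⟩ := SL2Z_lift h3 h4
  refine ⟨ρ, ⟨by rw [hρS, ha], by rw [hρT, hb]⟩, ?_⟩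
  rintro σ ⟨h1, h2⟩
  refine MonoidHom.eq_of_eqOn_dense SpecialLinearGroup.SL2Z_generators ?_
  rintro x (rfl | rfl)
  · rw [hρS]; exact Units.ext (h1.trans ha.symm)
  · rw [hρT]; exact Units.ext (h2.trans hb.symm)
end

section
/- There exist infinitely many finite-index subgroups of SL(2,ℤ) that are not congruence subgroups; that is, the set of subgroups H of SL(2,ℤ) of finite index such that for no positive integer m does H contain Γ(m) is infinite. -/
open Matrix MatrixGroups

section Aux
open UpperHalfPlane hiding I
open Complex ModularForm

lemma disc_smul (γ : SL(2,ℤ)) (z : ℍ) :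
    discriminant (γ • z) = ((γ 1 0 : ℂ) * z + γ 1 1) ^ 12 * discriminant z := by
  have h := congrFun (SlashInvariantForm.slash_action_generators_SL2Z discriminant_S_invariant discriminant_T_invariant γ) z
  rw [ModularForm.SL_slash_apply, ModularGroup.denom_apply] at h
  have h0 := UpperHalfPlane.denom_ne_zero γ z
  rw [ModularGroup.denom_apply] at h0
  rw [← h]
  rw [_root_.zpow_neg]
  field_simp

noncomputable def dbl (z : ℍ) : ℍ := ⟨2 * (z : ℂ), by simpa using z.im_pos⟩

lemma exists_sl (γ : SL(2,ℤ)) (hγ : γ ∈ CongruenceSubgroup.Gamma0 2) : ∃ γ' : SL(2,ℤ),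
    γ' 0 0 = γ 0 0 ∧ γ' 0 1 = 2 * γ 0 1 ∧ 2 * γ' 1 0 = γ 1 0 ∧ γ' 1 1 = γ 1 1 := by
  rw [CongruenceSubgroup.Gamma0_mem, ZMod.intCast_zmod_eq_zero_iff_dvd] at hγ
  obtain ⟨c, hc⟩ := hγ
  refine ⟨⟨!![γ 0 0, 2 * γ 0 1; c, γ 1 1], ?_⟩, by simp, by simp, by simpa using hc.symm, by simp⟩
  have := γ.det_coe
  rw [det_fin_two] at this ⊢
  simp at this ⊢
  rw [hc] at this
  push_cast at this
  linarith

lemma f_smul (γ : SL(2,ℤ)) (hγ : γ ∈ CongruenceSubgroup.Gamma0 2) (z : ℍ) :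
    discriminant (dbl (γ • z)) / discriminant (γ • z) = discriminant (dbl z) / discriminant z := by
  obtain ⟨γ', h1, h2, h3, h4⟩ := exists_sl γ hγ
  have h0 := UpperHalfPlane.denom_ne_zero γ z
  rw [ModularGroup.denom_apply] at h0
  have hc : (2 : ℂ) * (γ' 1 0 : ℂ) = γ 1 0 := by exact_mod_cast h3
  have hd : dbl (γ • z) = γ' • dbl z := by
    apply UpperHalfPlane.ext
    rw [UpperHalfPlane.coe_specialLinearGroup_apply]
    simp only [dbl]
    rw [UpperHalfPlane.coe_specialLinearGroup_apply]
    simp only [h1, h2, h4, eq_intCast, ofReal_intCast]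
    rw [← mul_div_assoc, ← hc]
    push_cast
    congr 1 <;> ring
  have he : (γ' 1 0 : ℂ) * (dbl z : ℂ) + γ' 1 1 = (γ 1 0 : ℂ) * z + γ 1 1 := by
    rw [h4, ← hc, dbl]; ring
  rw [hd, disc_smul, disc_smul, he]
  have := discriminant_ne_zero z
  field_simp

lemma exists_log_prod : ∃ l : ℂ → ℂ, ContinuousOn l (Metric.ball 0 1) ∧
    ∀ z : ℍ, exp (2 * Real.pi * I * z + 24 * l (exp (2 * Real.pi * I * z))) = discriminant z := by
  have hs : IsSimplyConnected (Metric.ball (0:ℂ) 1) := by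
    have : ContractibleSpace (Metric.ball (0:ℂ) 1) :=
      (convex_ball (0:ℂ) 1).contractibleSpace ⟨0, by simp⟩
    exact (inferInstance : SimplyConnectedSpace (Metric.ball (0:ℂ) 1))
  obtain ⟨l, hl, hl'⟩ := exists_continuousOn_eqOn_exp_comp hs Metric.isOpen_ball
    differentiableOn_tprod_one_sub_pow.continuousOn (by
      rintro ⟨q, hq, h0⟩
      have hq' : ‖q‖ < 1 := by simpa using hq
      revert h0
      refine tprod_one_add_ne_zero_of_summable (f := fun n ↦ -q ^ (n + 1)) ?_ ?_
      · intro i h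
        have : q ^ (i+1) = 1 := by linear_combination -h
        have h2 : ‖q‖ ^ (i+1) = 1 := by rw [← norm_pow, this, norm_one]
        have := pow_lt_one₀ (norm_nonneg q) hq' (Nat.succ_ne_zero i)
        exact this.ne h2
      · simpa using (summable_nat_add_iff 1).mpr (summable_geometric_of_lt_one (norm_nonneg _) hq'))
  refine ⟨l, hl, fun z => ?_⟩
  have hq : exp (2 * Real.pi * I * z) ∈ Metric.ball (0:ℂ) 1 := by
    simpa using UpperHalfPlane.norm_exp_two_pi_I_lt_one z
  have h := hl' hq
  simp only [Function.comp] at h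
  rw [exp_add, show (24:ℂ) = (24:ℕ) by norm_num, exp_nat_mul, h, discriminant_eq_q_prod,
    ← (multipliable_one_sub_pow (by simpa using hq)).tprod_pow]
  simp [Function.Periodic.qParam, eta_q]

lemma exists_fifth_root : ∃ h : ℍ → ℂ, Continuous h ∧ (∀ z, h z ≠ 0) ∧
    (∀ z, h z ^ 5 = discriminant (dbl z) / discriminant z) ∧
    (∀ z, h (ModularGroup.T • z) = exp (2 * Real.pi * I / 5) * h z) := by
  obtain ⟨l, hl, hl'⟩ := exists_log_prod
  have hc : Continuous fun z : ℍ =>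
      2 * Real.pi * I * z + 24 * l (exp (2 * Real.pi * I * z)) := by
    refine Continuous.add (by fun_prop) (continuous_const.mul ?_)
    refine hl.comp_continuous (by fun_prop) fun z => ?_
    simpa using UpperHalfPlane.norm_exp_two_pi_I_lt_one z
  have hd : Continuous dbl := by
    rw [UpperHalfPlane.isEmbedding_coe.continuous_iff]
    change Continuous fun z : ℍ => 2 * (z : ℂ)
    fun_prop
  set L : ℍ → ℂ := fun z : ℍ => 2 * Real.pi * I * z + 24 * l (exp (2 * Real.pi * I * z)) with hL
  refine ⟨fun z => exp ((L (dbl z) - L z) / 5), ?_, fun z => exp_ne_zero _, fun z => ?_, fun z => ?_⟩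
  · have := hc.comp hd
    simp only [Function.comp_def] at this
    fun_prop
  · rw [← exp_nat_mul, ← hl', ← hl', ← exp_sub]
    congr 1
    simp only [hL]
    push_cast
    ring
  · rw [← exp_add]
    have h1 : ((ModularGroup.T • z : ℍ) : ℂ) = z + 1 := by
      rw [UpperHalfPlane.modular_T_smul, UpperHalfPlane.coe_vadd]; push_cast; ring
    have h2 : ((dbl (ModularGroup.T • z) : ℍ) : ℂ) = dbl z + 2 := by
      change 2 * ((ModularGroup.T • z : ℍ) : ℂ) = 2 * z + 2
      rw [h1]; ring
    have e1 : exp (2 * Real.pi * I * ((z:ℂ) + 1)) = exp (2 * Real.pi * I * z) := by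
      rw [mul_add, mul_one, exp_periodic]
    have e2 : exp (2 * Real.pi * I * ((dbl z:ℂ) + 2)) = exp (2 * Real.pi * I * dbl z) := by
      rw [show 2 * Real.pi * I * ((dbl z:ℂ) + 2)
        = 2 * Real.pi * I * dbl z + 2 * Real.pi * I + 2 * Real.pi * I by ring, exp_periodic,
        exp_periodic]
    congr 1
    simp only [hL, h1, h2, e1, e2]
    ring

lemma sl_continuous (γ : SL(2,ℤ)) : Continuous (fun z : ℍ => γ • z) :=
  continuous_const_smul (SpecialLinearGroup.toGL (SpecialLinearGroup.map (Int.castRingHom ℝ) γ))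

lemma T_mem : ModularGroup.T ∈ CongruenceSubgroup.Gamma0 2 := by
  rw [CongruenceSubgroup.Gamma0_mem, ModularGroup.coe_T]
  simp

/-- The character of `Γ₀(2)` of order five. -/
lemma exists_char : ∃ χ : CongruenceSubgroup.Gamma0 2 →* ℂˣ, (∀ g, χ g ^ 5 = 1) ∧
    ((χ ⟨ModularGroup.T, T_mem⟩ : ℂˣ) : ℂ) = exp (2 * Real.pi * I / 5) := by
  obtain ⟨h, hc, h0, h5, hT⟩ := exists_fifth_root
  have key : ∀ γ ∈ CongruenceSubgroup.Gamma0 2, ∀ z w : ℍ,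
      h (γ • z) / h z = h (γ • w) / h w := by
    intro γ hγ z w
    have hfin : Set.Finite {x : ℂ | x ^ 5 = 1} := by
      refine (Polynomial.nthRootsFinset 5 (1:ℂ)).finite_toSet.subset fun x hx => ?_
      simpa [Polynomial.mem_nthRootsFinset] using hx
    have : Finite {x : ℂ | x ^ 5 = 1} := hfin
    refine isPreconnected_univ.constant_of_mapsTo (T := {x : ℂ | x ^ 5 = 1})
      (f := fun z => h (γ • z) / h z) ⟨inferInstance⟩ ?_ ?_ (Set.mem_univ z) (Set.mem_univ w)
    · exact ((hc.comp (sl_continuous γ)).div hc h0).continuousOn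
    · intro z _
      have := f_smul γ hγ z
      rw [← h5, ← h5] at this
      change (h (γ • z) / h z) ^ 5 = 1
      rw [div_pow, this, div_self (pow_ne_zero _ (h0 z))]
  let χ : CongruenceSubgroup.Gamma0 2 →* ℂ :=
    { toFun := fun g => h (g.1 • UpperHalfPlane.I) / h UpperHalfPlane.I
      map_one' := by simp [h0]
      map_mul' := fun a b => by
        rw [← key a.1 a.2 (b.1 • UpperHalfPlane.I), Subgroup.coe_mul, mul_smul]
        field_simp [h0] }
  refine ⟨χ.toHomUnits, fun g => ?_, ?_⟩
  · ext
    have := f_smul g.1 g.2 UpperHalfPlane.I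
    rw [← h5, ← h5] at this
    change (h (g.1 • UpperHalfPlane.I) / h UpperHalfPlane.I) ^ 5 = 1
    rw [div_pow, this, div_self (pow_ne_zero _ (h0 _))]
  · change h (ModularGroup.T • UpperHalfPlane.I) / h UpperHalfPlane.I = _
    rw [hT, mul_div_cancel_right₀ _ (h0 _)]

lemma exists_noncongruence : ∃ H : Subgroup SL(2,ℤ), H.FiniteIndex ∧
    ∀ m : ℕ, 0 < m → ¬ CongruenceSubgroup.Gamma m ≤ H := by
  obtain ⟨χ, h5, hT⟩ := exists_char
  have hfi : χ.ker.FiniteIndex := by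
    have : Finite χ.range := by
      have : (χ.range : Set ℂˣ) ⊆ rootsOfUnity 5 ℂ := by
        rintro _ ⟨g, rfl⟩
        exact h5 g
      have hf : Finite (rootsOfUnity 5 ℂ) := inferInstance
      exact Set.Finite.subset (s := (rootsOfUnity 5 ℂ : Set ℂˣ)) hf this
    infer_instance
  have hfi2 := (CongruenceSubgroup.Gamma0_is_congruence 2).finiteIndex
  refine ⟨χ.ker.map (CongruenceSubgroup.Gamma0 2).subtype, ⟨?_⟩, fun m hm hle => ?_⟩
  · rw [Subgroup.index_map_subtype]
    exact mul_ne_zero hfi.index_ne_zero hfi2.index_ne_zero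
  obtain ⟨p, hpm, hp, hp5⟩ := Nat.forall_exists_prime_gt_and_eq_mod (q := 5) (a := 2)
    (by decide) (10 * m)
  obtain ⟨k, hk⟩ : ∃ k : ℤ, (p : ℤ) = 2 + 5 * k := by
    have : ((p : ℤ) : ZMod 5) = ((2 : ℤ) : ZMod 5) := by simpa using hp5
    rw [ZMod.intCast_eq_intCast_iff_dvd_sub] at this
    obtain ⟨c, hc⟩ := this
    exact ⟨-c, by push_cast at hc; linarith⟩
  have hcop : IsCoprime (p : ℤ) (((2 * m : ℕ) : ℤ) ^ 2) := by
    apply IsCoprime.pow_right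
    rw [Nat.isCoprime_iff_coprime, hp.coprime_iff_not_dvd]
    intro hdvd
    have := Nat.le_of_dvd (by omega) hdvd
    omega
  obtain ⟨y, x, hxy⟩ := hcop
  set M : ℤ := ((2 * m : ℕ) : ℤ) with hM
  let D : SL(2,ℤ) := ⟨!![(p:ℤ), M; - M * x, y], by rw [det_fin_two]; simp; linarith⟩
  have hD : D ∈ CongruenceSubgroup.Gamma0 2 := by
    rw [CongruenceSubgroup.Gamma0_mem, ZMod.intCast_zmod_eq_zero_iff_dvd]
    exact ⟨-m * x, by simp [D, hM]; ring⟩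
  let T' : CongruenceSubgroup.Gamma0 2 := ⟨ModularGroup.T, T_mem⟩
  let D' : CongruenceSubgroup.Gamma0 2 := ⟨D, hD⟩
  let E : CongruenceSubgroup.Gamma0 2 := D' * T' * D'⁻¹ * T' ^ (-((p:ℤ)^2))
  have hE : (E : SL(2,ℤ)) ∈ CongruenceSubgroup.Gamma m := by
    have hMm : ((M : ℤ) : ZMod m) = 0 := by simp [hM]
    have e : (E : SL(2,ℤ)) = D * ModularGroup.T * D⁻¹ * ModularGroup.T ^ (-((p:ℤ)^2)) := by
      simp [E, D', T']
    have hd : (p : ZMod m) * y = 1 := by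
      have := congrArg (Int.cast : ℤ → ZMod m) hxy
      push_cast [hMm] at this
      linear_combination this
    generalize (E : SL(2,ℤ)) = G at e ⊢
    have e2 : (G : Matrix (Fin 2) (Fin 2) ℤ) =
        !![(p:ℤ), M; - M * x, y] * !![1, 1; 0, 1] * !![y, -M; M * x, p] * !![1, -(p:ℤ)^2; 0, 1] := by
      rw [e]
      have hDc : (D : Matrix (Fin 2) (Fin 2) ℤ) = !![(p:ℤ), M; - M * x, y] := rfl
      rw [Matrix.SpecialLinearGroup.coe_mul, Matrix.SpecialLinearGroup.coe_mul, Matrix.SpecialLinearGroup.coe_mul,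
        Matrix.SpecialLinearGroup.coe_inv, ModularGroup.coe_T_zpow, ModularGroup.coe_T, hDc,
        adjugate_fin_two_of, neg_mul, neg_neg]
    rw [CongruenceSubgroup.Gamma_mem]
    simp only [e2, Matrix.mul_apply, Fin.sum_univ_two]
    simp
    simp only [hMm]
    refine ⟨?_, ?_, ?_, ?_⟩ <;> grind
  obtain ⟨g, hg, hgE⟩ := hle hE
  have : g = E := Subtype.ext hgE
  subst this
  have h1 : χ E = χ T' ^ (1 - (p:ℤ)^2) := by
    simp only [E, map_mul, map_inv, map_zpow]
    rw [mul_inv_cancel_comm, sub_eq_add_neg, _root_.zpow_add, zpow_one]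
  have h2 : χ E = 1 := hg
  rw [h1] at h2
  have hprim : IsPrimitiveRoot (χ T') 5 := by
    rw [← IsPrimitiveRoot.coe_units_iff, hT]
    exact_mod_cast Complex.isPrimitiveRoot_exp 5 (by norm_num)
  rw [hprim.zpow_eq_one_iff_dvd, hk] at h2
  ring_nf at h2
  omega

end Aux

/-- There exist infinitely many finite index subgroups of `SL(2, ℤ)` which are not
congruence subgroups, i.e. which contain no principal congruence subgroup `Γ(m)`,
where `Γ(m)` is the kernel of the reduction-mod-`m` map `SL(2, ℤ) → SL(2, ℤ/mℤ)`. -/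
theorem infinitely_many_noncongruence_subgroups :
    {H : Subgroup SL(2, ℤ) | H.FiniteIndex ∧
      ∀ m : ℕ, 0 < m →
        ¬ (Matrix.SpecialLinearGroup.map (Int.castRingHom (ZMod m))).ker ≤ H}.Infinite := by
  intro hfin
  obtain ⟨H, hH⟩ := exists_noncongruence
  obtain ⟨K, ⟨hK1, hK2⟩, hmin⟩ := hfin.exists_minimal ⟨H, hH⟩
  obtain ⟨k, hk0, -, hk⟩ := Subgroup.exists_pow_mem_of_index_ne_zero hK1.index_ne_zero
    ModularGroup.T
  have hG := (CongruenceSubgroup.Gamma_is_cong_sub (k+1)).finiteIndex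
  have hle : K ≤ K ⊓ CongruenceSubgroup.Gamma (k + 1) :=
    hmin ⟨inferInstance, fun m hm h => hK2 m hm (h.trans inf_le_left)⟩ inf_le_left
  have hT : _ ∈ CongruenceSubgroup.Gamma (k + 1) := (hle hk).2
  rw [CongruenceSubgroup.Gamma_mem] at hT
  have h1 := hT.2.1
  rw [← zpow_natCast, ModularGroup.coe_T_zpow, ZMod.intCast_zmod_eq_zero_iff_dvd] at h1
  simp at h1
  have h2 : k + 1 ∣ k := by exact_mod_cast h1
  have := Nat.le_of_dvd hk0 h2
  omega
end

section
/- Let G be a group and ω : G × G × G → ℂˣ a normalized 3-cocycle, i.e. ω(g,h,k)·ω(g,hk,l)·ω(h,k,l) = ω(gh,k,l)·ω(g,h,kl) for all g,h,k,l ∈ G, and ω(1,h,k) = ω(g,1,k) = ω(g,h,1) = 1 for all g,h,k ∈ G. Define θ(x; g,h) = ω(x,g,h) · ω(g,h,(gh)⁻¹x(gh)) / ω(g, g⁻¹xg, h) for x,g,h ∈ G. Then for all x,g,h,k ∈ G one has θ(x; g,h) · θ(x; gh,k) = θ(g⁻¹xg; h,k) · θ(x; g,hk). -/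
/-- The coefficient `θ(x; g, h) = ω(x,g,h)·ω(g,h,(gh)⁻¹x(gh)) / ω(g, g⁻¹xg, h)` appearing
in the multiplication of the `ω`-twisted Drinfeld double `D^ω(G)`. -/
def drinfeldTheta {G : Type*} [Group G] (ω : G → G → G → ℂˣ) (x g h : G) : ℂˣ :=
  ω x g h * ω g h ((g * h)⁻¹ * x * (g * h)) / ω g (g⁻¹ * x * g) h

theorem dt_aux {M : Type*} [AddCommGroup M]
    (a1 a2 a3 b1 b2 b3 c1 c2 c3 d1 d2 d3 p q r s : M)
    (A : a1 + a2 + p = q + a3) (B : b1 + r + b2 = q + b3)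
    (C : c1 + r + c2 = c3 + s) (D : p + d1 + d2 = d3 + s) :
    (a1 + c1 - b1) + (a2 + d3 - c3) = (b2 + d2 - c2) + (a3 + d1 - b3) := by
  have hA : a1 = q + a3 - p - a2 := by rw [← A]; abel
  have hB : b1 = q + b3 - b2 - r := by rw [← B]; abel
  have hC : c1 = c3 + s - c2 - r := by rw [← C]; abel
  have hD : d3 = p + d1 + d2 - s := by rw [D]; abel
  subst hA hB hC hD
  abel

/-- If `ω` is a normalized 3-cocycle on a group `G` with values in `ℂˣ`, then the
coefficient `θ` satisfies the twisted 2-cocycle identity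
`θ(x; g,h)·θ(x; gh,k) = θ(g⁻¹xg; h,k)·θ(x; g,hk)`. -/
theorem drinfeldTheta_twisted_cocycle {G : Type*} [Group G] (ω : G → G → G → ℂˣ)
    (hcoc : ∀ g h k l : G,
      ω g h k * ω g (h * k) l * ω h k l = ω (g * h) k l * ω g h (k * l))
    (hnorm₁ : ∀ h k : G, ω 1 h k = 1)
    (hnorm₂ : ∀ g k : G, ω g 1 k = 1)
    (hnorm₃ : ∀ g h : G, ω g h 1 = 1) :
    ∀ x g h k : G,
      drinfeldTheta ω x g h * drinfeldTheta ω x (g * h) k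
        = drinfeldTheta ω (g⁻¹ * x * g) h k * drinfeldTheta ω x g (h * k) := by
  intro x g h k
  have A := hcoc x g h k
  have B := hcoc g (g⁻¹ * x * g) h k
  have C := hcoc g h ((g * h)⁻¹ * x * (g * h)) k
  have D := hcoc g h k ((g * h * k)⁻¹ * x * (g * h * k))
  have e1 : g * (g⁻¹ * x * g) = x * g := by group
  have e2 : g⁻¹ * x * g * h = h * ((g * h)⁻¹ * x * (g * h)) := by group
  have e3 : k * ((g * h * k)⁻¹ * x * (g * h * k)) = (g * h)⁻¹ * x * (g * h) * k := by group
  have e4 : h⁻¹ * (g⁻¹ * x * g) * h = (g * h)⁻¹ * x * (g * h) := by group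
  have e5 : (h * k)⁻¹ * (g⁻¹ * x * g) * (h * k) = (g * h * k)⁻¹ * x * (g * h * k) := by group
  rw [e1, e2] at B
  rw [e3] at D
  unfold drinfeldTheta
  rw [e4, e5, ← mul_assoc g h k]
  exact dt_aux (M := Additive ℂˣ) _ _ _ _ _ _ _ _ _ _ _ _ _ _ _ _ A B C D
end

section
/- Let G be a finite group and ω : G × G × G → ℂˣ a normalized 3-cocycle. On the complex vector space of functions G × G → ℂ, with basis {e_{(x,g)} : x,g ∈ G}, define the bilinear multiplication determined on basis elements by e_{(x,g)} · e_{(y,h)} = θ(x; g,h) · e_{(x,gh)} if x = g y g⁻¹ and e_{(x,g)} · e_{(y,h)} = 0 otherwise, where θ(x; g,h) = ω(x,g,h) · ω(g,h,(gh)⁻¹x(gh)) / ω(g, g⁻¹xg, h). Then this multiplication is associative, and the element Σ_{x ∈ G} e_{(x,1)} is a two-sided multiplicative unit; hence the ω-twisted Drinfeld double D^ω(G) is an associative unital ℂ-algebra. -/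
open scoped BigOperators

/-- The basis element `e_{(x,g)}` of the vector space of functions `G × G → ℂ`. -/
def drinfeldBasis {G : Type*} [DecidableEq G] (q : G × G) : G × G → ℂ :=
  fun p => if p = q then 1 else 0

/-- The multiplication of the `ω`-twisted Drinfeld double `D^ω(G)` on the vector space of
functions `G × G → ℂ`: it is the bilinear extension of
`e_{(x,g)} · e_{(y,h)} = θ(x; g,h) e_{(x,gh)}` if `x = gyg⁻¹`, and `0` otherwise.
Explicitly, `(f₁ · f₂)(x, k) = ∑_{g ∈ G} f₁(x, g) · θ(x; g, g⁻¹k) · f₂(g⁻¹xg, g⁻¹k)`. -/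
noncomputable def drinfeldMul {G : Type*} [Group G] [Fintype G] (ω : G → G → G → ℂˣ)
    (f₁ f₂ : G × G → ℂ) : G × G → ℂ :=
  fun p => ∑ g : G,
    f₁ (p.1, g) * (drinfeldTheta ω p.1 g (g⁻¹ * p.2) : ℂ) * f₂ (g⁻¹ * p.1 * g, g⁻¹ * p.2)

theorem drinfeld_aux {A : Type*} [AddCommGroup A]
    (a1 a2 a3 b1 b2 b3 c1 c2 c3 d1 d2 d3 p q r s : A)
    (hA : a1 + a2 + p = q + a3) (hB : b1 + r + b2 = q + b3)
    (hC : c1 + r + c2 = c3 + s) (hD : p + d1 + d2 = d3 + s) :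
    (a1 + c1 - b1) + (a2 + d3 - c3) = (a3 + d1 - b3) + (b2 + d2 - c2) := by
  have e1 : a1 = q + a3 - p - a2 := by rw [← hA]; abel
  have e2 : b1 = q + b3 - b2 - r := by rw [← hB]; abel
  have e3 : c1 = c3 + s - c2 - r := by rw [← hC]; abel
  have e4 : d3 = p + d1 + d2 - s := by rw [hD]; abel
  rw [e1, e2, e3, e4]
  abel

theorem drinfeldTheta_cocycle {G : Type*} [Group G] (ω : G → G → G → ℂˣ)
    (hcoc : ∀ g h k l : G,
      ω g h k * ω g (h * k) l * ω h k l = ω (g * h) k l * ω g h (k * l))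
    (x g h k : G) :
    drinfeldTheta ω x g h * drinfeldTheta ω x (g * h) k =
      drinfeldTheta ω x g (h * k) * drinfeldTheta ω (g⁻¹ * x * g) h k := by
  obtain ⟨y, hy⟩ : ∃ y, y = g⁻¹ * x * g := ⟨_, rfl⟩
  obtain ⟨z, hz⟩ : ∃ z, z = h⁻¹ * y * h := ⟨_, rfl⟩
  obtain ⟨w, hw⟩ : ∃ w, w = k⁻¹ * z * k := ⟨_, rfl⟩
  have hz' : (g * h)⁻¹ * x * (g * h) = z := by rw [hz, hy]; group
  have hw' : (g * h * k)⁻¹ * x * (g * h * k) = w := by rw [hw, hz, hy]; group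
  have hw2 : (h * k)⁻¹ * y * (h * k) = w := by rw [hw, hz]; group
  have xg : x * g = g * y := by rw [hy]; group
  have yh : y * h = h * z := by rw [hz]; group
  have zk : z * k = k * w := by rw [hw]; group
  have hA := hcoc x g h k
  have hB := hcoc g y h k
  have hC := hcoc g h z k
  have hD := hcoc g h k w
  rw [xg] at hA
  rw [yh] at hB
  rw [zk] at hC
  unfold drinfeldTheta
  rw [← mul_assoc g h k, ← hy, hz', hw', hw2, ← hz]
  exact drinfeld_aux (A := Additive ℂˣ) _ _ _ _ _ _ _ _ _ _ _ _ _ _ _ _ hA hB hC hD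

/-- For a finite group `G` and a normalized 3-cocycle `ω` on `G` with values in `ℂˣ`, the
multiplication of the `ω`-twisted Drinfeld double `D^ω(G)` on functions `G × G → ℂ`:
(i) is given on basis elements by `e_{(x,g)} · e_{(y,h)} = θ(x; g,h) e_{(x,gh)}` when
`x = gyg⁻¹` and `0` otherwise; (ii) is associative; and (iii) has the element
`∑_{x ∈ G} e_{(x,1)}` as a two-sided unit.  Hence `D^ω(G)` is an associative unital
`ℂ`-algebra. -/
theorem drinfeldDouble_associative_unital {G : Type*} [Group G] [Fintype G] [DecidableEq G]
    (ω : G → G → G → ℂˣ)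
    (hcoc : ∀ g h k l : G,
      ω g h k * ω g (h * k) l * ω h k l = ω (g * h) k l * ω g h (k * l))
    (hnorm₁ : ∀ h k : G, ω 1 h k = 1)
    (hnorm₂ : ∀ g k : G, ω g 1 k = 1)
    (hnorm₃ : ∀ g h : G, ω g h 1 = 1) :
    (∀ x g y h : G,
      drinfeldMul ω (drinfeldBasis (x, g)) (drinfeldBasis (y, h))
        = if x = g * y * g⁻¹ then (drinfeldTheta ω x g h : ℂ) • drinfeldBasis (x, g * h)
          else 0) ∧
    (∀ f₁ f₂ f₃ : G × G → ℂ,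
      drinfeldMul ω (drinfeldMul ω f₁ f₂) f₃ = drinfeldMul ω f₁ (drinfeldMul ω f₂ f₃)) ∧
    (∀ f : G × G → ℂ,
      drinfeldMul ω (∑ x : G, drinfeldBasis (x, (1 : G))) f = f ∧
      drinfeldMul ω f (∑ x : G, drinfeldBasis (x, (1 : G))) = f) := by
  have hone : ∀ p : G × G, (∑ x : G, drinfeldBasis (x, (1 : G))) p =
      if p.2 = 1 then (1 : ℂ) else 0 := by
    rintro ⟨a, b⟩
    rw [Finset.sum_apply]
    by_cases hb : b = 1 <;> simp [drinfeldBasis, hb]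
  refine ⟨?_, ?_, ?_⟩
  · intro x g y h
    funext ⟨a, b⟩
    unfold drinfeldMul
    rw [Finset.sum_eq_single g]
    · by_cases ha : a = x
      · subst ha
        by_cases hb : b = g * h
        · subst hb
          by_cases hx : a = g * y * g⁻¹
          · have : g⁻¹ * a * g = y := by rw [hx]; group
            simp only [inv_mul_cancel_left, this]
            rw [if_pos hx]
            simp [drinfeldBasis]
          · have : g⁻¹ * a * g ≠ y := by
              intro e; apply hx; rw [← e]; group
            rw [if_neg hx]
            simp [drinfeldBasis, this]
        · have : g⁻¹ * b ≠ h := by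
            intro e; apply hb; rw [← e]; group
          split_ifs <;> simp [drinfeldBasis, this, hb]
      · split_ifs <;> simp [drinfeldBasis, ha]
    · intro c _ hc
      simp [drinfeldBasis, hc]
    · simp
  · intro f₁ f₂ f₃
    funext ⟨x, m⟩
    simp only [drinfeldMul, Finset.sum_mul, Finset.mul_sum]
    rw [Finset.sum_comm]
    refine Finset.sum_congr rfl fun g _ => ?_
    rw [← Equiv.sum_comp (Equiv.mulLeft g)]
    refine Finset.sum_congr rfl fun h _ => ?_
    obtain ⟨k, rfl⟩ : ∃ k, m = g * h * k := ⟨(g * h)⁻¹ * m, by group⟩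
    have e1 : g⁻¹ * (g * h * k) = h * k := by group
    have e2 : (g * h)⁻¹ * x * (g * h) = h⁻¹ * (g⁻¹ * x * g) * h := by group
    have key := congrArg (Units.val) (drinfeldTheta_cocycle ω hcoc x g h k)
    simp only [Units.val_mul] at key
    simp only [Equiv.coe_mulLeft, inv_mul_cancel_left, e1, e2]
    linear_combination (f₁ (x, g) * f₂ (g⁻¹ * x * g, h) *
      f₃ (h⁻¹ * (g⁻¹ * x * g) * h, k)) * key
  · intro f
    constructor
    · funext ⟨a, b⟩
      unfold drinfeldMul
      rw [Finset.sum_eq_single 1]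
      · simp [hone, drinfeldTheta, hnorm₁, hnorm₂]
      · intro c _ hc
        simp [hone, hc]
      · simp
    · funext ⟨a, b⟩
      unfold drinfeldMul
      rw [Finset.sum_eq_single b]
      · simp [hone, drinfeldTheta, hnorm₂, hnorm₃]
      · intro c _ hc
        have : c⁻¹ * b ≠ 1 := by
          intro e; exact hc (inv_mul_eq_one.mp e)
        rw [hone]
        simp [this]
      · simp
end
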